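/- arXiv:1005.5185 — 2 statements merged into one kernel-verified Lean document; each statement's English description precedes it below -/
import Mathlib

section
/- Let i be an integer with 2 < i ≤ n. Let r₁, r₂, r₃ be positive integers, M an r₂×r₁ matrix over B, and N an (r₃−1)×(r₂−1) matrix over B, and suppose that the sequence B^{r₃} → B^{r₂} → B^{r₁}, whose maps are right multiplication by the r₃×r₂ matrix N ⋆ Γ_i and by M respectively, is exact at B^{r₂}. Then the sequence B^{r₃+1} → B^{r₂+1} → B^{r₁+1}, whose maps are right multiplication by the matrix N ⋆ Γ_i ⋆ Γ_{i−2} and by the matrix M ⋆ Γ_{i−1} respectively, is exact at B^{r₂+1}. -/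
noncomputable section

inductive Gen (n : ℕ) : Type
  | a : Fin (n+1) → Gen n
  | b : Fin (n+1) → Gen n
  | c : Fin (n+1) → Gen n

variable (K : Type) [Field K] (n : ℕ)

/-- The tensor algebra `T(V)` on the span of the generators, i.e. the free algebra. -/
abbrev FA := FreeAlgebra K (Gen n)

/-- `a_i`, with the convention that out-of-range indices give `0`. -/
def ga (i : ℤ) : FA K n :=
  if h : 0 ≤ i ∧ i ≤ (n : ℤ) then FreeAlgebra.ι K (Gen.a ⟨i.toNat, by omega⟩) else 0

def gb (i : ℤ) : FA K n :=
  if h : 0 ≤ i ∧ i ≤ (n : ℤ) then FreeAlgebra.ι K (Gen.b ⟨i.toNat, by omega⟩) else 0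

def gc (i : ℤ) : FA K n :=
  if h : 0 ≤ i ∧ i ≤ (n : ℤ) then FreeAlgebra.ι K (Gen.c ⟨i.toNat, by omega⟩) else 0

/-- The set `R` of defining relations. -/
def rels : Set (FA K n) :=
  { x | x = ga K n n * gb K n n * gc K n n ∨ x = gc K n 0 * ga K n 0 ∨
      ∃ i : ℕ, i < n ∧
        (x = ga K n i * gb K n i * gc K n i + gc K n (i+1) * ga K n (i+1) * gb K n (i+1) ∨
         x = gb K n (i+1) * gc K n (i+1) * ga K n (i+1) ∨
         x = gc K n i * gc K n (i+1) ∨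
         x = gb K n (i+1) * ga K n i) }

/-- The relation whose ring-quotient is `B = T(V)/⟨R⟩`. -/
def BRel (x y : FA K n) : Prop := x ∈ rels K n ∧ y = 0

/-- The algebra `B = T(V)/⟨R⟩`. -/
abbrev B := RingQuot (BRel K n)

/-- The quotient map `π_B : T(V) → B`. -/
def πB : FA K n →ₐ[K] B K n := RingQuot.mkAlgHom K (BRel K n)

/-- The image of `a_i` in `B` (zero for out-of-range indices). -/
def aB (i : ℤ) : B K n := πB K n (ga K n i)
def bB (i : ℤ) : B K n := πB K n (gb K n i)
def cB (i : ℤ) : B K n := πB K n (gc K n i)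

/-- The left annihilator of `x`, as a left ideal of `B`. -/
def lann (x : B K n) : Ideal (B K n) where
  carrier := {w | w * x = 0}
  add_mem' := by
    intro a b ha hb
    simp only [Set.mem_setOf_eq, add_mul] at *
    rw [ha, hb, add_zero]
  zero_mem' := by simp
  smul_mem' := by
    intro c w hw
    simp only [Set.mem_setOf_eq, smul_eq_mul, mul_assoc] at *
    rw [hw, mul_zero]

end

/-- The star product `M ⋆ N` of an `a×b` matrix and a `c×d` matrix: the `(a+c-1)×(b+d)`
matrix with `M` in the top-left `a×b` corner, `N` occupying rows `a,…,a+c-1` and columns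
`b+1,…,b+d`, and zeros elsewhere. -/
def starM {R : Type} [Semiring R] {a b c d : ℕ}
    (M : Matrix (Fin a) (Fin b) R) (N : Matrix (Fin c) (Fin d) R) :
    Matrix (Fin (a + c - 1)) (Fin (b + d)) R :=
  Matrix.of fun i j =>
    if hij : i.val < a ∧ j.val < b then M ⟨i.val, hij.1⟩ ⟨j.val, hij.2⟩
    else if hij' : a - 1 ≤ i.val ∧ b ≤ j.val then
      N ⟨i.val - (a - 1), by have := i.isLt; omega⟩ ⟨j.val - b, by have := j.isLt; omega⟩
    else 0

/-- The column matrix `Γ_i` for `i ≥ 1`, with entries `a_i b_i` and `c_{i-1}`. -/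
def GammaP (K : Type) [Field K] (n : ℕ) (i : ℤ) : Matrix (Fin 2) (Fin 1) (B K n) :=
  !![aB K n i * bB K n i; cB K n (i - 1)]

/-!
The matrices `N ⋆ Γ_i ⋆ Γ_{i-2}` and `M ⋆ Γ_{i-1}` add one coordinate `y` to a vector `v` with
`v M = 0`, say `v = u (N ⋆ Γ_i)`. By the relations of `B`, the new equation for `y` becomes
`(y - u_last a_{i-2} b_{i-2}) c_{i-2} = 0`, so exactness amounts to the left annihilator of
`c_{i-2}` being `B c_{i-3}`. To see that `y c_k = 0` forces `y ∈ B c_{k-1}`, extend the module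
`B / B c_{k-1}` by a vector `q` with `c_k q = [1]` and apply `y c_k` to `q`.

If `N` has no rows, `N ⋆ Γ_i` is the single row `(0, …, 0, a_i b_i)`, and no such sequence is exact:
`a_i b_i m = 0` implies `b_{i-1} c_{i-1} m = 0`, so `b_{i-1} c_{i-1}` would have to lie in
`B a_i b_i`, which a character of `B` excludes.
-/

/-! ### Exactness of star products -/

section Star

open Matrix

variable {R : Type} [Ring R] {r s t : ℕ}

lemma snoc_vecMul_starM (M : Matrix (Fin (s + 1)) (Fin r) R) (G : Matrix (Fin 2) (Fin 1) R)
    (v : Fin (s + 1) → R) (y : R) :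
    (Fin.snoc v y : Fin (s + 2) → R) ᵥ* starM M G =
      (Fin.snoc (v ᵥ* M) (v (Fin.last s) * G 0 0 + y * G 1 0) : Fin (r + 1) → R) := by
  ext j
  induction j using Fin.lastCases with
  | last =>
    have (l : Fin s) : ¬s ≤ l := l.isLt.not_ge
    simp [vecMul, dotProduct, Fin.sum_univ_castSucc, starM, this]
  | cast j => simp [vecMul, dotProduct, Fin.sum_univ_castSucc, starM]

lemma snoc_vecMul_starM_eq_zero_iff {M : Matrix (Fin (s + 1)) (Fin r) R}
    {G : Matrix (Fin 2) (Fin 1) R} {v : Fin (s + 1) → R} {y : R} :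
    (Fin.snoc v y : Fin (s + 2) → R) ᵥ* starM M G = 0 ↔
      v ᵥ* M = 0 ∧ v (Fin.last s) * G 0 0 + y * G 1 0 = 0 := by
  have zero_eq_snoc : (0 : Fin (r + 1) → R) = Fin.snoc (0 : Fin r → R) 0 :=
    (Fin.snoc_init_self 0).symm
  rw [snoc_vecMul_starM]
  exact zero_eq_snoc ▸ Fin.snoc_inj

lemma snoc_mem_range_vecMul_starM {P : Matrix (Fin (t + 1)) (Fin s) R}
    {G : Matrix (Fin 2) (Fin 1) R} {v : Fin s → R} {y : R} :
    (Fin.snoc v y : Fin (s + 1) → R) ∈ Set.range (fun u : Fin (t + 2) → R ↦ u ᵥ* starM P G) ↔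
      ∃ u, u ᵥ* P = v ∧ ∃ z, u (Fin.last t) * G 0 0 + z * G 1 0 = y := by
  constructor
  · rintro ⟨u, hu⟩
    cases u using Fin.snocCases with | snoc u z =>
    obtain ⟨hv, hy⟩ := Fin.snoc_inj.mp ((snoc_vecMul_starM P G u z).symm.trans hu)
    exact ⟨u, hv, z, hy⟩
  · rintro ⟨u, rfl, z, rfl⟩
    exact ⟨Fin.snoc u z, snoc_vecMul_starM P G u z⟩

lemma exact_starM {P : Matrix (Fin (t + 1)) (Fin (s + 1)) R} {M : Matrix (Fin (s + 1)) (Fin r) R}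
    {G G' : Matrix (Fin 2) (Fin 1) R}
    (hlast : ∀ u, (u ᵥ* P) (Fin.last s) * G 0 0 + u (Fin.last t) * G' 0 0 * G 1 0 = 0)
    (hann : ∀ y, y * G 1 0 = 0 ↔ ∃ z, z * G' 1 0 = y)
    (hexact : Function.Exact (· ᵥ* P) (· ᵥ* M)) :
    Function.Exact (fun u : Fin (t + 2) → R ↦ u ᵥ* starM P G')
      (fun v : Fin (s + 2) → R ↦ v ᵥ* starM M G) := by
  have last_iff (u : Fin (t + 1) → R) (y : R) :
      (u ᵥ* P) (Fin.last s) * G 0 0 + y * G 1 0 = 0 ↔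
        ∃ z, u (Fin.last t) * G' 0 0 + z * G' 1 0 = y := by
    rw [eq_neg_of_add_eq_zero_left (hlast u), neg_add_eq_sub, ← sub_mul, hann]
    simp only [eq_sub_iff_add_eq']
  intro v
  cases v using Fin.snocCases with | snoc v y =>
  rw [snoc_vecMul_starM_eq_zero_iff, snoc_mem_range_vecMul_starM, hexact v]
  constructor
  · rintro ⟨⟨u, rfl⟩, hy⟩
    exact ⟨u, rfl, (last_iff u y).mp hy⟩
  · rintro ⟨u, rfl, hy⟩
    exact ⟨⟨u, rfl⟩, (last_iff u y).mpr hy⟩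

lemma exact_starM_starM {N : Matrix (Fin (t + 1)) (Fin s) R} {M : Matrix (Fin (s + 1)) (Fin r) R}
    {G₀ G₁ G₂ : Matrix (Fin 2) (Fin 1) R} (h₀₁ : G₀ 0 0 * G₁ 0 0 = 0)
    (h₀₁₂ : G₀ 1 0 * G₁ 0 0 + G₂ 0 0 * G₁ 1 0 = 0)
    (hann : ∀ y, y * G₁ 1 0 = 0 ↔ ∃ z, z * G₂ 1 0 = y)
    (hexact : Function.Exact (fun u : Fin (t + 2) → R ↦ u ᵥ* starM N G₀) (· ᵥ* M)) :
    Function.Exact (fun u : Fin (t + 3) → R ↦ u ᵥ* starM (starM N G₀) G₂)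
      (fun v : Fin (s + 2) → R ↦ v ᵥ* starM M G₁) := by
  refine exact_starM (fun u ↦ ?_) hann hexact
  cases u using Fin.snocCases with | snoc u z =>
  rw [snoc_vecMul_starM, Fin.snoc_last, Fin.snoc_last, add_mul, mul_assoc, mul_assoc, mul_assoc,
    h₀₁, mul_zero, zero_add, ← mul_add, h₀₁₂, mul_zero]

-- The truncated `0 - 1` in `starM` keeps the first row of `G` when `N` has no rows.
lemma vecMul_starM_fin_zero (N : Matrix (Fin 0) (Fin s) R) (G : Matrix (Fin 2) (Fin 1) R)
    (u : Fin 1 → R) :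
    u ᵥ* starM N G = (Pi.single (Fin.last s) (u 0 * G 0 0) : Fin (s + 1) → R) := by
  ext j
  induction j using Fin.lastCases with
  | last => simp [vecMul, dotProduct, starM]
  | cast j => simp [vecMul, dotProduct, starM]

lemma exists_mul_eq_of_exact_starM_fin_zero {N : Matrix (Fin 0) (Fin s) R}
    {M : Matrix (Fin (s + 1)) (Fin r) R} {G : Matrix (Fin 2) (Fin 1) R}
    (hexact : Function.Exact (fun u : Fin 1 → R ↦ u ᵥ* starM N G) (· ᵥ* M))
    {x : R} (hx : ∀ m, G 0 0 * m = 0 → x * m = 0) : ∃ z, z * G 0 0 = x := by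
  have mul_last (j : Fin r) : G 0 0 * M (Fin.last s) j = 0 := by
    have := hexact.apply_apply_eq_zero 1
    rw [vecMul_starM_fin_zero, single_vecMul] at this
    simpa using congr_fun this j
  obtain ⟨u, hu⟩ := (hexact (Pi.single (Fin.last s) x)).mp <|
    (single_vecMul ..).trans <| funext fun j ↦ hx _ (mul_last j)
  refine ⟨u 0, ?_⟩
  simpa [vecMul_starM_fin_zero] using congr_fun hu (Fin.last s)

end Star

/-! ### The universal property of `B` -/

/-- The elements `a i`, `b i`, `c i` with `0 ≤ i ≤ n` of a ring satisfy the defining relations of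
`B`. The values at other indices are irrelevant. -/
structure SatisfiesRels {A : Type*} [Ring A] (n : ℕ) (a b c : ℤ → A) : Prop where
  abc_last : a n * b n * c n = 0
  ca_zero : c 0 * a 0 = 0
  abc_add_cab (i : ℤ) : 0 ≤ i → i < n →
    a i * b i * c i + c (i + 1) * a (i + 1) * b (i + 1) = 0
  bca (i : ℤ) : 0 ≤ i → i < n → b (i + 1) * c (i + 1) * a (i + 1) = 0
  cc (i : ℤ) : 0 ≤ i → i < n → c i * c (i + 1) = 0
  ba (i : ℤ) : 0 ≤ i → i < n → b (i + 1) * a i = 0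

/-- The function on the generators determined by three families indexed by `ℤ`. -/
def Gen.elim {n : ℕ} {A : Type*} (a b c : ℤ → A) : Gen n → A
  | .a i => a i
  | .b i => b i
  | .c i => c i

namespace B

section Presentation

variable {K : Type} [Field K] {n : ℕ}

lemma πB_eq_zero {x : FA K n} (hx : x ∈ rels K n) : πB K n x = 0 := by
  simpa only [πB, map_zero] using RingQuot.mkAlgHom_rel K (s := BRel K n) ⟨hx, rfl⟩

variable (K n) in
lemma satisfiesRels : SatisfiesRels n (aB K n) (bB K n) (cB K n) := by
  constructor
  case abc_last =>
    simpa only [aB, bB, cB, ← map_mul] using πB_eq_zero (.inl rfl)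
  case ca_zero =>
    simpa only [aB, bB, cB, ← map_mul] using πB_eq_zero (.inr (.inl rfl))
  all_goals
    intro i hi hin
    lift i to ℕ using hi
    rw [Nat.cast_lt] at hin
    simp only [aB, bB, cB, ← map_mul, ← map_add]
    refine πB_eq_zero (.inr (.inr ⟨i, hin, ?_⟩))
    simp only [true_or, or_true]

lemma cB_of_neg {i : ℤ} (hi : i < 0) : cB K n i = 0 := by
  rw [cB, gc, dif_neg (by omega), map_zero]

lemma cB_mul_aB_mul_bB {k : ℤ} (hk : 0 ≤ k) (hkn : k ≤ n) :
    cB K n k * aB K n k * bB K n k = -(aB K n (k - 1) * bB K n (k - 1) * cB K n (k - 1)) := by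
  obtain rfl | hk := hk.eq_or_lt
  · rw [(satisfiesRels K n).ca_zero, cB_of_neg (by omega), zero_mul, mul_zero, neg_zero]
  · have h := (satisfiesRels K n).abc_add_cab (k - 1) (by omega) (by omega)
    rw [sub_add_cancel] at h
    exact eq_neg_of_add_eq_zero_right h

lemma induction {P : B K n → Prop} (algebraMap : ∀ r, P (algebraMap K _ r))
    (aB : ∀ i : ℤ, 0 ≤ i → i ≤ n → P (aB K n i)) (bB : ∀ i : ℤ, 0 ≤ i → i ≤ n → P (bB K n i))
    (cB : ∀ i : ℤ, 0 ≤ i → i ≤ n → P (cB K n i))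
    (mul : ∀ x y, P x → P y → P (x * y)) (add : ∀ x y, P x → P y → P (x + y)) (x : B K n) :
    P x := by
  obtain ⟨x, rfl⟩ := RingQuot.mkAlgHom_surjective K (BRel K n) x
  induction x using FreeAlgebra.induction with
  | grade0 r => simpa only [AlgHom.commutes] using algebraMap r
  | grade1 x =>
    rcases x with i | i | i
    · simpa [_root_.aB, ga, πB, Fin.is_le] using aB i (by omega) (by omega)
    · simpa [_root_.bB, gb, πB, Fin.is_le] using bB i (by omega) (by omega)
    · simpa [_root_.cB, gc, πB, Fin.is_le] using cB i (by omega) (by omega)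
  | mul x y hx hy => simpa only [map_mul] using mul _ _ hx hy
  | add x y hx hy => simpa only [map_add] using add _ _ hx hy

section Lift

variable {A : Type*} [Ring A] [Algebra K A] {a b c : ℤ → A} {i : ℤ}

lemma freeAlgebra_lift_ga (a b c : ℤ → A) (hi : 0 ≤ i) (hin : i ≤ n) :
    FreeAlgebra.lift K (Gen.elim a b c) (ga K n i) = a i := by
  simp [ga, hi, hin, Gen.elim]

lemma freeAlgebra_lift_gb (a b c : ℤ → A) (hi : 0 ≤ i) (hin : i ≤ n) :
    FreeAlgebra.lift K (Gen.elim a b c) (gb K n i) = b i := by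
  simp [gb, hi, hin, Gen.elim]

lemma freeAlgebra_lift_gc (a b c : ℤ → A) (hi : 0 ≤ i) (hin : i ≤ n) :
    FreeAlgebra.lift K (Gen.elim a b c) (gc K n i) = c i := by
  simp [gc, hi, hin, Gen.elim]

lemma freeAlgebra_lift_eq_zero (h : SatisfiesRels n a b c) {x : FA K n} (hx : x ∈ rels K n) :
    FreeAlgebra.lift K (Gen.elim a b c) x = 0 := by
  rcases hx with rfl | rfl | ⟨i, hi, rfl | rfl | rfl | rfl⟩ <;>
    simp (disch := omega) only [map_mul, map_add, freeAlgebra_lift_ga, freeAlgebra_lift_gb,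
      freeAlgebra_lift_gc]
  · exact h.abc_last
  · exact h.ca_zero
  · exact h.abc_add_cab i (by omega) (by omega)
  · exact h.bca i (by omega) (by omega)
  · exact h.cc i (by omega) (by omega)
  · exact h.ba i (by omega) (by omega)

variable (K) in
/-- The universal property of `B`: the algebra homomorphism sending `a_i`, `b_i`, `c_i` to given
elements that satisfy the defining relations. -/
noncomputable def lift (h : SatisfiesRels n a b c) : B K n →ₐ[K] A :=
  RingQuot.liftAlgHom K ⟨FreeAlgebra.lift K (Gen.elim a b c), by
    rintro x y ⟨hx, rfl⟩
    rw [freeAlgebra_lift_eq_zero h hx, map_zero]⟩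

lemma lift_πB (h : SatisfiesRels n a b c) (x : FA K n) :
    lift K h (πB K n x) = FreeAlgebra.lift K (Gen.elim a b c) x :=
  RingQuot.liftAlgHom_mkAlgHom_apply ..

lemma lift_aB (h : SatisfiesRels n a b c) (hi : 0 ≤ i) (hin : i ≤ n) :
    lift K h (aB K n i) = a i := by
  rw [aB, lift_πB, freeAlgebra_lift_ga a b c hi hin]

lemma lift_bB (h : SatisfiesRels n a b c) (hi : 0 ≤ i) (hin : i ≤ n) :
    lift K h (bB K n i) = b i := by
  rw [bB, lift_πB, freeAlgebra_lift_gb a b c hi hin]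

lemma lift_cB (h : SatisfiesRels n a b c) (hi : 0 ≤ i) (hin : i ≤ n) :
    lift K h (cB K n i) = c i := by
  rw [cB, lift_πB, freeAlgebra_lift_gc a b c hi hin]

end Lift

end Presentation

/-! ### The left annihilator of `c_k` -/

section LeftAnnihilator

variable {K : Type} [Field K] {n : ℕ} {G : Type*} [AddCommGroup G] [Module (B K n) G] {k : ℤ}
  {g : G}

lemma bB_smul_aB_smul {i : ℤ} (hi : 0 ≤ i) (hin : i < n) (x : G) :
    bB K n (i + 1) • aB K n i • x = 0 := by
  rw [smul_smul, (satisfiesRels K n).ba i hi hin, zero_smul]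

lemma cB_smul_aB_smul_bB_smul (hk : 0 ≤ k) (hkn : k ≤ n) (hg : cB K n (k - 1) • g = 0) :
    cB K n k • aB K n k • bB K n k • g = 0 := by
  rw [smul_smul, smul_smul, cB_mul_aB_mul_bB hk hkn, neg_smul, mul_smul, hg, smul_zero, neg_zero]

variable [Module K G] [IsScalarTower K (B K n) G]

/-- The action of `a_i` on the extension of the `B`-module `G` by new basis vectors `q`, `p`, `s`
with `c_k q = g`, `b_{k+1} q = p`, `a_{k+1} p = s`, `c_{k+1} s = -a_k b_k g`, on which every other
generator vanishes; see `extendB` and `extendC`. The vector `q` is there to realise `g` as a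
multiple of `c_k`; `p` and `s` are forced by `a_k b_k c_k + c_{k+1} a_{k+1} b_{k+1} = 0`. -/
def extendA (k i : ℤ) : Module.End K (G × K × K × K) where
  toFun v := (aB K n i • v.1, 0, 0, if i = k + 1 then v.2.2.1 else 0)
  map_add' v w := by simp [ite_add_zero]
  map_smul' r v := by simp [smul_comm r]

/-- The action of `b_i` on the extension of `G` described at `extendA`. -/
def extendB (k i : ℤ) : Module.End K (G × K × K × K) where
  toFun v := (bB K n i • v.1, 0, if i = k + 1 then v.2.1 else 0, 0)
  map_add' v w := by simp [ite_add_zero]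
  map_smul' r v := by simp [smul_comm r]

/-- The action of `c_i` on the extension of `G` described at `extendA`. -/
def extendC (k : ℤ) (g : G) (i : ℤ) : Module.End K (G × K × K × K) where
  toFun v := (cB K n i • v.1 + (if i = k then v.2.1 • g else 0) -
    if i = k + 1 then v.2.2.2 • aB K n k • bB K n k • g else 0, 0, 0, 0)
  map_add' v w := by
    simp only [Prod.fst_add, Prod.snd_add, smul_add, add_smul, ite_add_zero, Prod.mk_add_mk,
      add_zero]
    abel_nf
  map_smul' r v := by simp [smul_comm r, mul_smul, smul_sub, smul_add]

lemma extendA_apply (i : ℤ) (x : G) (q p s : K) :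
    extendA (n := n) k i (x, q, p, s) = (aB K n i • x, 0, 0, if i = k + 1 then p else 0) := rfl

lemma extendB_apply (i : ℤ) (x : G) (q p s : K) :
    extendB (n := n) k i (x, q, p, s) = (bB K n i • x, 0, if i = k + 1 then q else 0, 0) := rfl

lemma extendC_apply (i : ℤ) (x : G) (q p s : K) :
    extendC (n := n) k g i (x, q, p, s) = (cB K n i • x + (if i = k then q • g else 0) -
      if i = k + 1 then s • aB K n k • bB K n k • g else 0, 0, 0, 0) := rfl

lemma extendB_extendC_apply (hk : 0 ≤ k) (hkn : k < n) (i : ℤ) (x : G) (q p s : K) :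
    extendB (n := n) k i (extendC (n := n) k g i (x, q, p, s)) =
      (bB K n i • cB K n i • x + if i = k then q • bB K n k • g else 0, 0, 0, 0) := by
  have hb := bB_smul_aB_smul (K := K) hk hkn (bB K n k • g)
  rw [extendC_apply, extendB_apply, ite_self]
  obtain rfl | hi := eq_or_ne i (k + 1)
  · simp [smul_sub, smul_comm _ s, hb]
  · obtain rfl | hik := eq_or_ne i k
    · simp [smul_comm _ q]
    · simp [hi, hik]

lemma extendC_extendA_apply (i : ℤ) (x : G) (q p s : K) :
    extendC (n := n) k g i (extendA (n := n) k i (x, q, p, s)) =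
      (cB K n i • aB K n i • x - if i = k + 1 then p • aB K n k • bB K n k • g else 0,
        0, 0, 0) := by
  rw [extendA_apply, extendC_apply]
  split_ifs <;> simp

lemma extendC_extendC_apply (hk : 0 ≤ k) (hkn : k < n) (hg : cB K n (k - 1) • g = 0) {i : ℤ}
    (hi : 0 ≤ i) (hin : i < n) (v : G × K × K × K) :
    extendC (n := n) k g i (extendC (n := n) k g (i + 1) v) = 0 := by
  obtain ⟨x, q, p, s⟩ := v
  have hcc : cB K n i • cB K n (i + 1) • x = 0 := by
    rw [smul_smul, (satisfiesRels K n).cc i hi hin, zero_smul]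
  have hcabg := cB_smul_aB_smul_bB_smul hk hkn.le hg
  have hq : (if i + 1 = k then q • cB K n i • g else 0) = 0 := by
    split_ifs with h
    · rw [eq_sub_of_add_eq h, hg, smul_zero]
    · rfl
  have hs : (if i = k then s • cB K n i • aB K n k • bB K n k • g else 0) = 0 := by
    split_ifs with h
    · rw [h, hcabg, smul_zero]
    · rfl
  simp [extendC_apply, smul_sub, smul_add, smul_comm _ q, smul_comm _ s, hcc, hq, hs]

lemma satisfiesRels_extend (hk : 0 ≤ k) (hkn : k < n) (hg : cB K n (k - 1) • g = 0) :
    SatisfiesRels n (extendA (K := K) (n := n) (G := G) k) (extendB (n := n) k)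
      (extendC (n := n) k g) := by
  have h := satisfiesRels K n
  constructor
  case abc_last =>
    refine LinearMap.ext fun ⟨x, q, p, s⟩ ↦ ?_
    have hx : aB K n n • bB K n n • cB K n n • x = 0 := by
      rw [smul_smul, smul_smul, h.abc_last, zero_smul]
    simp [extendB_extendC_apply hk hkn, extendA_apply, hkn.ne', hx]
  case ca_zero =>
    refine LinearMap.ext fun ⟨x, q, p, s⟩ ↦ ?_
    have hx : cB K n 0 • aB K n 0 • x = 0 := by rw [smul_smul, h.ca_zero, zero_smul]
    have hk_ne : 0 ≠ k + 1 := by omega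
    simp only [Module.End.mul_apply, extendC_extendA_apply, hx, if_neg hk_ne, sub_zero]
    rfl
  all_goals
    intro i hi hin
    refine LinearMap.ext fun ⟨x, q, p, s⟩ ↦ ?_
  case abc_add_cab =>
    have hx : aB K n i • bB K n i • cB K n i • x +
        cB K n (i + 1) • aB K n (i + 1) • bB K n (i + 1) • x = 0 := by
      simp only [smul_smul, ← add_smul, h.abc_add_cab i hi hin, zero_smul, ← mul_assoc]
    simp only [LinearMap.add_apply, Module.End.mul_apply]
    rw [extendB_extendC_apply hk hkn, extendB_apply, extendC_extendA_apply, extendA_apply]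
    obtain rfl | hik := eq_or_ne i k
    · simpa [smul_comm _ q, add_sub_assoc, add_right_comm] using hx
    · simpa [hik] using hx
  case bca =>
    have hx : bB K n (i + 1) • cB K n (i + 1) • aB K n (i + 1) • x = 0 := by
      rw [smul_smul, smul_smul, h.bca i hi hin, zero_smul]
    simp [extendB_extendC_apply hk hkn, extendA_apply, hx]
  case cc => exact extendC_extendC_apply hk hkn hg hi hin _
  case ba => simp [extendA_apply, extendB_apply, bB_smul_aB_smul hi hin]

lemma smul_eq_zero_of_mul_cB_eq_zero (hk : 0 ≤ k) (hkn : k < n) (hg : cB K n (k - 1) • g = 0)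
    {y : B K n} (hy : y * cB K n k = 0) : y • g = 0 := by
  have h := satisfiesRels_extend hk hkn hg
  have lift_apply (y : B K n) (x : G) : lift K h y (x, 0, 0, 0) = (y • x, 0, 0, 0) := by
    induction y using induction generalizing x with
    | algebraMap r => simp
    | aB i hi hin => rw [lift_aB h hi hin, extendA_apply, ite_self]
    | bB i hi hin => rw [lift_bB h hi hin, extendB_apply, ite_self]
    | cB i hi hin => simp [lift_cB h hi hin, extendC_apply]
    | mul y z hy hz => simp only [map_mul, Module.End.mul_apply, hz, hy, mul_smul]
    | add y z hy hz => simp [hy, hz, add_smul]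
  have := congr((lift K h $hy (0, 1, 0, 0)).1)
  rw [map_mul, Module.End.mul_apply, lift_cB h hk hkn.le, extendC_apply] at this
  simpa [lift_apply] using this

lemma mul_cB_eq_zero_iff (hk : 0 ≤ k) (hkn : k < n) {y : B K n} :
    y * cB K n k = 0 ↔ ∃ z, z * cB K n (k - 1) = y := by
  constructor
  · intro hy
    have hg : cB K n (k - 1) • (Submodule.span (B K n) {cB K n (k - 1)}).mkQ 1 = 0 := by
      rw [← map_smul, smul_eq_mul, mul_one]
      simp
    have := smul_eq_zero_of_mul_cB_eq_zero hk hkn hg hy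
    rwa [← map_smul, smul_eq_mul, mul_one, Submodule.mkQ_apply, Submodule.Quotient.mk_eq_zero,
      Submodule.mem_span_singleton] at this
  · rintro ⟨z, rfl⟩
    rw [mul_assoc]
    obtain rfl | hk := hk.eq_or_lt
    · rw [cB_of_neg (by omega), zero_mul, mul_zero]
    · have := (satisfiesRels K n).cc (k - 1) (by omega) (by omega)
      rw [sub_add_cancel] at this
      rw [this, mul_zero]

end LeftAnnihilator

/-! ### The right annihilator of `a_i b_i` -/

section CornerMatrix

open Matrix

/-- An upper triangular matrix with diagonal `0, 0, x`. In the ring of such matrices the generators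
of `B` are deformed, by `p = 1` for `a_i` and `q = t` for `b_i`, so that `a_i b_i` acquires the
entry `r = t`. -/
def cornerMatrix {R : Type*} [Zero R] (p q r x : R) : Matrix (Fin 3) (Fin 3) R :=
  !![0, p, r; 0, 0, q; 0, 0, x]

variable {R : Type*} [Ring R]

lemma cornerMatrix_zero : cornerMatrix (0 : R) 0 0 0 = 0 :=
  (eta_fin_three 0).symm

lemma cornerMatrix_add (p q r x p' q' r' x' : R) :
    cornerMatrix p q r x + cornerMatrix p' q' r' x' =
      cornerMatrix (p + p') (q + q') (r + r') (x + x') := by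
  simp [cornerMatrix]

lemma cornerMatrix_mul (p q r x p' q' r' x' : R) :
    cornerMatrix p q r x * cornerMatrix p' q' r' x' =
      cornerMatrix 0 (q * x') (p * q' + r * x') (x * x') := by
  simp [cornerMatrix]

lemma single_zero_one_vecMul_cornerMatrix (q r x : R) :
    Pi.single 0 1 ᵥ* cornerMatrix 0 q r x = Pi.single 2 r := by
  ext j
  fin_cases j <;> simp [cornerMatrix]

lemma single_two_vecMul_cornerMatrix (y p q r x : R) :
    Pi.single 2 y ᵥ* cornerMatrix p q r x = Pi.single 2 (y * x) := by
  ext j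
  fin_cases j <;> simp [cornerMatrix]

end CornerMatrix

section RightAnnihilator

open Matrix

variable {K : Type} [Field K] {n : ℕ} {i : ℤ} {t : B K n}

lemma satisfiesRels_cornerMatrix (htc : t * cB K n i = 0) (hta : t * aB K n (i - 1) = 0) :
    SatisfiesRels n (fun j ↦ cornerMatrix (if j = i then 1 else 0) 0 0 (aB K n j))
      (fun j ↦ cornerMatrix 0 (if j = i then t else 0) 0 (bB K n j))
      (fun j ↦ cornerMatrix 0 0 0 (cB K n j)) := by
  have h := satisfiesRels K n
  have hb_mul_c (j : ℤ) : (if j = i then t else 0) * cB K n j = 0 := by grind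
  have hb_mul_a (j : ℤ) : (if j + 1 = i then t else 0) * aB K n j = 0 := by grind
  constructor <;> intros <;>
    simp only [cornerMatrix_mul, cornerMatrix_add, mul_zero, zero_mul, add_zero,
      mul_assoc, hb_mul_c, hb_mul_a] <;>
    simp only [← mul_assoc, h.abc_last, h.ca_zero, h.abc_add_cab, h.bca, h.cc, h.ba, *,
      cornerMatrix_zero]

lemma mul_eq_zero_of_aB_mul_bB_mul_eq_zero (hi : 0 ≤ i) (hin : i ≤ n)
    (htc : t * cB K n i = 0) (hta : t * aB K n (i - 1) = 0) {m : B K n}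
    (hm : aB K n i * bB K n i * m = 0) : t * m = 0 := by
  have h := satisfiesRels_cornerMatrix htc hta
  have single_vecMul_lift (x y : B K n) :
      Pi.single 2 x ᵥ* lift K h y = Pi.single 2 (x * y) := by
    induction y using induction generalizing x with
    | algebraMap r =>
      rw [AlgHom.commutes, algebraMap_eq_diagonal, single_vecMul_diagonal, Pi.algebraMap_apply]
    | aB j hj hjn => rw [lift_aB h hj hjn, single_two_vecMul_cornerMatrix]
    | bB j hj hjn => rw [lift_bB h hj hjn, single_two_vecMul_cornerMatrix]
    | cB j hj hjn => rw [lift_cB h hj hjn, single_two_vecMul_cornerMatrix]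
    | mul y z hy hz => rw [map_mul, ← vecMul_vecMul, hy, hz, mul_assoc]
    | add y z hy hz => rw [map_add, vecMul_add, hy, hz, mul_add, Pi.single_add]
  have lift_ab : Pi.single 0 1 ᵥ* lift K h (aB K n i * bB K n i) = Pi.single 2 t := by
    rw [map_mul, lift_aB h hi hin, lift_bB h hi hin, cornerMatrix_mul,
      single_zero_one_vecMul_cornerMatrix, if_pos rfl, if_pos rfl, one_mul, zero_mul, add_zero]
  have : Pi.single 2 (t * m) = (0 : Fin 3 → B K n) := by
    rw [← single_vecMul_lift, ← lift_ab, vecMul_vecMul, ← map_mul, hm, map_zero, vecMul_zero]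
  rwa [Pi.single_eq_zero_iff] at this

end RightAnnihilator

section Character

variable {K : Type} [Field K] {n : ℕ}

lemma satisfiesRels_character (j : ℤ) :
    SatisfiesRels (A := K) n 0 (Pi.single j 1) (Pi.single j 1) where
  abc_last := by simp
  ca_zero := by simp
  abc_add_cab := by simp
  bca := by simp
  cc i _ _ := by
    obtain rfl | hi := eq_or_ne i j
    · rw [Pi.single_eq_of_ne (by omega : i + 1 ≠ i), mul_zero]
    · rw [Pi.single_eq_of_ne hi, zero_mul]
  ba := by simp

lemma mul_aB_mul_bB_ne_bB_mul_cB {i j : ℤ} (hi : 0 ≤ i) (hin : i ≤ n) (hj : 0 ≤ j) (hjn : j ≤ n)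
    (z : B K n) : z * (aB K n i * bB K n i) ≠ bB K n j * cB K n j := by
  intro h
  have hχ := satisfiesRels_character (K := K) (n := n) j
  simpa [lift_aB hχ hi hin, lift_bB hχ hj hjn, lift_cB hχ hj hjn] using congr(lift K hχ $h)

end Character

end B

/-! ### The matrices `Γ_i` -/

section Gamma

variable {K : Type} [Field K] {n : ℕ} {i : ℤ}

lemma GammaP_zero_mul_GammaP_zero (hi : 1 ≤ i) (hin : i ≤ n) :
    GammaP K n i 0 0 * GammaP K n (i - 1) 0 0 = 0 := by
  have hba := (B.satisfiesRels K n).ba (i - 1) (by omega) (by omega)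
  rw [sub_add_cancel] at hba
  calc aB K n i * bB K n i * (aB K n (i - 1) * bB K n (i - 1))
    _ = aB K n i * (bB K n i * aB K n (i - 1)) * bB K n (i - 1) := by simp only [mul_assoc]
    _ = 0 := by rw [hba, mul_zero, zero_mul]

lemma GammaP_one_mul_GammaP_zero_add (hi : 1 ≤ i) (hin : i ≤ n) :
    GammaP K n i 1 0 * GammaP K n (i - 1) 0 0 +
      GammaP K n (i - 2) 0 0 * GammaP K n (i - 1) 1 0 = 0 := by
  have hcab := B.cB_mul_aB_mul_bB (K := K) (n := n) (k := i - 1) (by omega) (by omega)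
  rw [show i - 2 = i - 1 - 1 by ring]
  exact eq_neg_iff_add_eq_zero.mp ((mul_assoc _ _ _).symm.trans hcab)

lemma mul_GammaP_one_eq_zero_iff (hi : 2 ≤ i) (hin : i ≤ n) {y : B K n} :
    y * GammaP K n (i - 1) 1 0 = 0 ↔ ∃ z, z * GammaP K n (i - 2) 1 0 = y := by
  rw [show i - 2 = i - 1 - 1 by ring]
  exact B.mul_cB_eq_zero_iff (by omega) (by omega)

lemma bB_mul_cB_mul_eq_zero_of_GammaP_zero_mul (hi : 2 ≤ i) (hin : i ≤ n) {m : B K n}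
    (hm : GammaP K n i 0 0 * m = 0) : bB K n (i - 1) * cB K n (i - 1) * m = 0 := by
  have hcc := (B.satisfiesRels K n).cc (i - 1) (by omega) (by omega)
  have hbca := (B.satisfiesRels K n).bca (i - 2) (by omega) (by omega)
  rw [sub_add_cancel] at hcc
  rw [show i - 2 + 1 = i - 1 by ring] at hbca
  exact B.mul_eq_zero_of_aB_mul_bB_mul_eq_zero (by omega) hin
    (by rw [mul_assoc, hcc, mul_zero]) hbca hm

end Gamma

/-- Lemma 3.5(3)/(4)-type induction step.  Here the positive integers are
`r₁`, `r₂ = s₂ + 1` and `r₃ = s₃ + 1`, so that `M` is an `r₂×r₁` matrix and `N` an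
`(r₃−1)×(r₂−1)` matrix.  If `B^{r₃} → B^{r₂} → B^{r₁}` with maps right multiplication by
`N ⋆ Γ_i` and `M` is exact at `B^{r₂}`, then `B^{r₃+1} → B^{r₂+1} → B^{r₁+1}` with maps
right multiplication by `N ⋆ Γ_i ⋆ Γ_{i−2}` and `M ⋆ Γ_{i−1}` is exact at `B^{r₂+1}`. -/
theorem stmt_12 (K : Type) [Field K] (n : ℕ) (i : ℕ) (hi2 : 2 < i) (hin : i ≤ n)
    (r₁ s₂ s₃ : ℕ) (hr₁ : 0 < r₁)
    (M : Matrix (Fin (s₂ + 1)) (Fin r₁) (B K n))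
    (N : Matrix (Fin s₃) (Fin s₂) (B K n))
    (hexact : ∀ v : Fin (s₂ + 1) → B K n,
      Matrix.vecMul v M = 0 ↔
      ∃ u : Fin (s₃ + 1) → B K n, v = Matrix.vecMul u (starM N (GammaP K n i))) :
    ∀ v : Fin (s₂ + 2) → B K n,
      Matrix.vecMul v (starM M (GammaP K n ((i : ℤ) - 1))) = 0 ↔
      ∃ u : Fin (s₃ + 2) → B K n,
        v = Matrix.vecMul u (starM (starM N (GammaP K n i)) (GammaP K n ((i : ℤ) - 2))) := by
  have exact_N_M : Function.Exact
      (fun u : Fin (s₃ + 1) → B K n ↦ Matrix.vecMul u (starM N (GammaP K n i)))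
      (fun v ↦ Matrix.vecMul v M) :=
    fun v ↦ (hexact v).trans (exists_congr fun _ ↦ eq_comm)
  rcases s₃ with _ | s₃
  · obtain ⟨z, hz⟩ := exists_mul_eq_of_exact_starM_fin_zero exact_N_M
      fun _ ↦ bB_mul_cB_mul_eq_zero_of_GammaP_zero_mul (by omega) (by omega)
    exact absurd hz
      (B.mul_aB_mul_bB_ne_bB_mul_cB (by omega) (by omega) (by omega) (by omega) z)
  · have := exact_starM_starM (GammaP_zero_mul_GammaP_zero (by omega) (by omega))
      (GammaP_one_mul_GammaP_zero_add (by omega) (by omega))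
      (fun _ ↦ mul_GammaP_one_eq_zero_iff (by omega) (by omega)) exact_N_M
    exact fun v ↦ (this v).trans (exists_congr fun _ ↦ eq_comm)
end

section
/- For 0 ≤ p ≤ n with n ≡ p (mod 2), set R_p = Γ_n ⋆ Γ_{n−2} ⋆ Γ_{n−4} ⋆ ⋯ ⋆ Γ_p and U_{p−1} = (c_n) ⋆ Γ_{n−1} ⋆ Γ_{n−3} ⋆ ⋯ ⋆ Γ_{p−1}. Then the eventually periodic complex of finitely generated free left B-modules ⋯ → F₃ → F₂ → F₁ = B → B c_n → 0, whose augmentation is z ↦ z c_n and whose differentials, reading from the augmentation leftward, are right multiplication successively by R_n, U_{n−1}, R_{n−2}, U_{n−3}, …, and which thereafter continues 2-periodically with the pair (U_1, R_0) repeated when n is even and with the pair (R_1, U_0) repeated when n is odd (the ranks of the free modules F_j being dictated by the sizes of these matrices), is exact; i.e., it is a free resolution of the left ideal B c_n of B. -/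
/-- A matrix over `R` bundled with its dimensions. -/
structure MatB (R : Type) [Semiring R] where
  rows : ℕ
  cols : ℕ
  M : Matrix (Fin rows) (Fin cols) R

/-- Star product of bundled matrices. -/
def MatB.star {R : Type} [Semiring R] (P Q : MatB R) : MatB R :=
  ⟨P.rows + Q.rows - 1, P.cols + Q.cols, starM P.M Q.M⟩

/-- The bundled matrix `Γ_i` (this is `Γ_0 = (a_0 b_0)` when `i = 0`, and the `2×1` column
with entries `a_i b_i`, `c_{i-1}` when `i ≥ 1`). -/
def GammaMat (K : Type) [Field K] (n : ℕ) (i : ℤ) : MatB (B K n) :=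
  if i = 0 then ⟨1, 1, !![aB K n 0 * bB K n 0]⟩
  else ⟨2, 1, GammaP K n i⟩

/-- `P ⋆ Γ_i`, with the convention that `P ⋆ Γ_i = P` for `i < 0`. -/
def starGamma (K : Type) [Field K] (n : ℕ) (P : MatB (B K n)) (i : ℤ) : MatB (B K n) :=
  if i < 0 then P else P.star (GammaMat K n i)

/-- `R_p = Γ_n ⋆ Γ_{n−2} ⋆ ⋯ ⋆ Γ_p` (for `0 ≤ p ≤ n` with `n ≡ p (mod 2)`). -/
def Rmat (K : Type) [Field K] (n : ℕ) (p : ℕ) : MatB (B K n) :=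
  (((List.range ((n - p) / 2)).map fun t => (n : ℤ) - 2 * (t + 1))).foldl
    (starGamma K n) (GammaMat K n n)

/-- `U_{p−1} = (c_n) ⋆ Γ_{n−1} ⋆ Γ_{n−3} ⋆ ⋯ ⋆ Γ_{p−1}` (this def takes `p` as argument). -/
def Umat (K : Type) [Field K] (n : ℕ) (p : ℕ) : MatB (B K n) :=
  (((List.range ((n - p) / 2 + 1)).map fun t => (n : ℤ) - 1 - 2 * t)).foldl
    (starGamma K n) ⟨1, 1, !![cB K n n]⟩

/-- The sequence of differentials of the complex of Lemma 3.6 resolving `B c_n`: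
`DC j` is the `(j+1)`-st differential (so `DC 0 : F₂ → F₁`), namely right multiplication
successively by `R_n, U_{n−1}, R_{n−2}, U_{n−3}, …`, continuing `2`-periodically with the
pair `(U_1, R_0)` when `n` is even and `(R_1, U_0)` when `n` is odd. -/
def DC (K : Type) [Field K] (n : ℕ) (j : ℕ) : MatB (B K n) :=
  if j ≤ n then (if j % 2 = 0 then Rmat K n (n - j) else Umat K n (n - j + 1))
  else (if j % 2 = 0 then Rmat K n (n % 2) else Umat K n (2 - n % 2))

/-!
The left syzygies among the generators of an algebra given by generators and relations are spanned
by the Fox derivatives of the relations. For `B` this determines the left annihilators of `c_n` and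
of `c_i` with `i < n`, and shows that `x a_n b_n ∈ B c_{n-1}` forces `x ∈ B c_n`.

All the matrices `R_p` and `U_p` are truncations of a single operator on sequences in `B`,
`(d v)_i = v_{i+1} a_i b_i + v_{i-1} c_{i-1}`, and the relations of `B` give `d² = 0`. If
`d v = 0`, then a sequence `w` with `v = d w` is constructed by downward induction on the index: the
last fact above and the annihilator of `c_n` start the induction at the indices `n + 1` and `n`.
If `v_{i+2} = (d w)_{i+2}`, then `(d v)_{i+1} = 0` says that `v_i - w_{i+1} a_i b_i` annihilates
`c_i`, so that it equals `w_{i-1} c_{i-1}` for a suitable `w_{i-1}`.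
-/

section FoxDerivative

variable {k X : Type*} [CommRing k] {A : Type*} [Ring A] [Algebra k A]
  {M : Type*} [AddCommGroup M] [Module k M] [Module A M] [IsScalarTower k A M]

/-- The action of the free algebra on the extension `M × k` of the trivial module `k` by the
`A`-module `M` in which a generator `x` sends `(p, r)` to `(π x • p + r • m x, 0)`. -/
noncomputable def extensionAction (π : FreeAlgebra k X →ₐ[k] A) (m : X → M) :
    FreeAlgebra k X →ₐ[k] Module.End k (M × k) :=
  FreeAlgebra.lift k fun x ↦ LinearMap.inl k M k ∘ₗ
    (Algebra.lsmul k k M (π (FreeAlgebra.ι k x))).coprod (LinearMap.toSpanSingleton k M (m x))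

/-- The Fox derivative with values in `M`: on a word it removes the last letter `x` and lets the
remaining word act on `m x`. It is encoded as the `M`-component of the action on
`(0, 1) : M × k`. -/
noncomputable def foxDerivative (π : FreeAlgebra k X →ₐ[k] A) (m : X → M) :
    FreeAlgebra k X →ₗ[k] M :=
  LinearMap.fst k M k ∘ₗ LinearMap.applyₗ ((0, 1) : M × k) ∘ₗ (extensionAction π m).toLinearMap

variable (π : FreeAlgebra k X →ₐ[k] A) (m : X → M)

theorem extensionAction_ι_apply (x : X) (p : M) (r : k) :
    extensionAction π m (FreeAlgebra.ι k x) (p, r) = (π (FreeAlgebra.ι k x) • p + r • m x, 0) := by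
  simp [extensionAction]

theorem foxDerivative_ι (x : X) : foxDerivative π m (FreeAlgebra.ι k x) = m x := by
  simp [foxDerivative, extensionAction_ι_apply]

theorem extensionAction_apply (z : FreeAlgebra k X) (p : M) (r : k) :
    extensionAction π m z (p, r) =
      (π z • p + r • foxDerivative π m z, FreeAlgebra.algebraMapInv z * r) := by
  induction z using FreeAlgebra.induction generalizing p r with
  | grade0 s => simp [foxDerivative, FreeAlgebra.algebraMapInv]
  | grade1 x => simp [extensionAction_ι_apply, foxDerivative_ι, FreeAlgebra.algebraMapInv]
  | mul z w hz hw =>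
    have hmul : foxDerivative π m (z * w) =
        π z • foxDerivative π m w + FreeAlgebra.algebraMapInv w • foxDerivative π m z := by
      change (extensionAction π m (z * w) (0, 1)).1 = _
      simp [hw, hz]
    simp only [map_mul, Module.End.mul_apply, hw, hz, hmul, Prod.mk.injEq]
    refine ⟨?_, by ring⟩
    rw [smul_add, smul_add, smul_smul, mul_smul (FreeAlgebra.algebraMapInv w), smul_comm r,
      smul_comm r, add_assoc]
  | add z w hz hw =>
    simp only [map_add, LinearMap.add_apply, hz, hw, Prod.mk_add_mk, add_smul, smul_add, add_mul]
    exact congrArg (·, _) (add_add_add_comm _ _ _ _)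

theorem foxDerivative_mul (z w : FreeAlgebra k X) :
    foxDerivative π m (z * w) =
      π z • foxDerivative π m w + FreeAlgebra.algebraMapInv w • foxDerivative π m z := by
  change (extensionAction π m (z * w) (0, 1)).1 = _
  simp [extensionAction_apply]

/-- The syzygies between the generators of `RingQuot rel` are spanned by the Fox derivatives of its
relations; this is the dual form, that any `m` killing these derivatives kills all syzygies. -/
theorem exists_linearMap_mul_ι_eq_smul {rel : FreeAlgebra k X → FreeAlgebra k X → Prop}
    [Module (RingQuot rel) M] [IsScalarTower k (RingQuot rel) M] {m : X → M}
    (hε : ∀ ⦃z w⦄, rel z w → FreeAlgebra.algebraMapInv z = FreeAlgebra.algebraMapInv w)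
    (hm : ∀ ⦃z w⦄, rel z w → foxDerivative (RingQuot.mkAlgHom k rel) m z =
      foxDerivative (RingQuot.mkAlgHom k rel) m w) :
    ∃ D : RingQuot rel →ₗ[k] M,
      ∀ y x, D (y * RingQuot.mkAlgHom k rel (FreeAlgebra.ι k x)) = y • m x := by
  let π := RingQuot.mkAlgHom k rel
  have action_eq : ∀ ⦃z w⦄, rel z w → extensionAction π m z = extensionAction π m w := by
    intro z w hzw
    refine LinearMap.ext fun ⟨p, r⟩ ↦ ?_
    rw [extensionAction_apply, extensionAction_apply, hε hzw, hm hzw,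
      RingQuot.mkAlgHom_rel k hzw]
  let ρ := RingQuot.liftAlgHom k ⟨extensionAction π m, action_eq⟩
  refine ⟨LinearMap.fst k M k ∘ₗ LinearMap.applyₗ ((0, 1) : M × k) ∘ₗ ρ.toLinearMap, ?_⟩
  intro y x
  obtain ⟨z, rfl⟩ := RingQuot.mkAlgHom_surjective k rel y
  simp [ρ, π, extensionAction_apply, foxDerivative_ι, FreeAlgebra.algebraMapInv]

end FoxDerivative

section Relations

variable (K : Type) [Field K] (n : ℕ)

/-- The element `a_i b_i` of `B`. -/
noncomputable def abB (i : ℤ) : B K n := aB K n i * bB K n i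

variable {K n}

theorem aB_eq_zero_of_not_mem {i : ℤ} (hi : ¬(0 ≤ i ∧ i ≤ n)) : aB K n i = 0 := by
  rw [aB, ga, dif_neg hi, map_zero]

theorem bB_eq_zero_of_not_mem {i : ℤ} (hi : ¬(0 ≤ i ∧ i ≤ n)) : bB K n i = 0 := by
  rw [bB, gb, dif_neg hi, map_zero]

theorem cB_eq_zero_of_not_mem {i : ℤ} (hi : ¬(0 ≤ i ∧ i ≤ n)) : cB K n i = 0 := by
  rw [cB, gc, dif_neg hi, map_zero]

theorem abB_eq_zero_of_not_mem {i : ℤ} (hi : ¬(0 ≤ i ∧ i ≤ n)) : abB K n i = 0 := by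
  rw [abB, aB_eq_zero_of_not_mem hi, zero_mul]

theorem πB_eq_zero_of_mem_rels {x : FA K n} (hx : x ∈ rels K n) : πB K n x = 0 :=
  (RingQuot.mkAlgHom_rel K (s := BRel K n) ⟨hx, rfl⟩).trans (map_zero _)

theorem cB_mul_cB_succ (i : ℤ) : cB K n i * cB K n (i + 1) = 0 := by
  by_cases hi : 0 ≤ i
  · by_cases hin : i < n
    · lift i to ℕ using hi
      rw [cB, cB, ← map_mul]
      exact πB_eq_zero_of_mem_rels (.inr (.inr ⟨i, by omega, .inr (.inr (.inl rfl))⟩))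
    · rw [cB_eq_zero_of_not_mem (i := i + 1) (by omega), mul_zero]
  · rw [cB_eq_zero_of_not_mem (i := i) (by omega), zero_mul]

theorem bB_succ_mul_aB (i : ℤ) : bB K n (i + 1) * aB K n i = 0 := by
  by_cases hi : 0 ≤ i
  · by_cases hin : i < n
    · lift i to ℕ using hi
      rw [aB, bB, ← map_mul]
      exact πB_eq_zero_of_mem_rels (.inr (.inr ⟨i, by omega, .inr (.inr (.inr rfl))⟩))
    · rw [bB_eq_zero_of_not_mem (by omega), zero_mul]
  · rw [aB_eq_zero_of_not_mem (by omega), mul_zero]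

theorem cB_zero_mul_aB_zero : cB K n 0 * aB K n 0 = 0 := by
  rw [aB, cB, ← map_mul]
  exact πB_eq_zero_of_mem_rels (.inr (.inl rfl))

theorem abB_top_mul_cB_top : abB K n n * cB K n n = 0 := by
  rw [abB, aB, bB, cB, ← map_mul, ← map_mul]
  exact πB_eq_zero_of_mem_rels (.inl rfl)

theorem abB_mul_cB_add_cB_succ_mul_abB_succ (i : ℤ) :
    abB K n i * cB K n i + cB K n (i + 1) * abB K n (i + 1) = 0 := by
  by_cases hi : 0 ≤ i ∧ i < n
  · lift i to ℕ using hi.1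
    rw [abB, abB, ← mul_assoc (cB K n (i + 1)), aB, bB, cB, aB, bB, cB]
    simp only [← map_mul, ← map_add]
    exact πB_eq_zero_of_mem_rels (.inr (.inr ⟨i, by omega, .inl rfl⟩))
  · have hleft : abB K n i * cB K n i = 0 := by
      obtain rfl | hin := eq_or_ne i n
      · exact abB_top_mul_cB_top
      · rw [abB_eq_zero_of_not_mem (by omega), zero_mul]
    have hright : cB K n (i + 1) * abB K n (i + 1) = 0 := by
      obtain rfl | hi' := eq_or_ne i (-1)
      · rw [neg_add_cancel, abB, ← mul_assoc, cB_zero_mul_aB_zero, zero_mul]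
      · rw [abB_eq_zero_of_not_mem (by omega), mul_zero]
    rw [hleft, hright, add_zero]

theorem abB_succ_mul_abB (i : ℤ) : abB K n (i + 1) * abB K n i = 0 := by
  rw [abB, abB, mul_assoc, ← mul_assoc (bB K n (i + 1)), bB_succ_mul_aB, zero_mul, mul_zero]

end Relations

section Syzygies

/-- The family of vectors attached to the generators `a_i`, `b_i`, `c_i` by three sequences, of
which only the terms with index in `[0, n]` matter. -/
def Gen.family {n : ℕ} {M : Type*} (α β γ : ℤ → M) : Gen n → M
  | .a i => α i
  | .b i => β i
  | .c i => γ i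

variable {K : Type} [Field K] {n : ℕ}

theorem algebraMapInv_ga (i : ℤ) : FreeAlgebra.algebraMapInv (ga K n i) = 0 := by
  unfold ga; split_ifs <;> simp [FreeAlgebra.algebraMapInv]

theorem algebraMapInv_gb (i : ℤ) : FreeAlgebra.algebraMapInv (gb K n i) = 0 := by
  unfold gb; split_ifs <;> simp [FreeAlgebra.algebraMapInv]

theorem algebraMapInv_gc (i : ℤ) : FreeAlgebra.algebraMapInv (gc K n i) = 0 := by
  unfold gc; split_ifs <;> simp [FreeAlgebra.algebraMapInv]

theorem algebraMapInv_eq_zero_of_mem_rels {r : FA K n} (hr : r ∈ rels K n) :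
    FreeAlgebra.algebraMapInv r = 0 := by
  rcases hr with rfl | rfl | ⟨i, -, rfl | rfl | rfl | rfl⟩ <;>
    simp [algebraMapInv_gb, algebraMapInv_gc]

variable {M : Type*} [AddCommGroup M] [Module K M] [Module (B K n) M] [IsScalarTower K (B K n) M]

variable (α β γ : ℤ → M) {i : ℤ}

theorem foxDerivative_ga (hi : 0 ≤ i ∧ i ≤ n) :
    foxDerivative (πB K n) (Gen.family α β γ) (ga K n i) = α i := by
  rw [ga, dif_pos hi, foxDerivative_ι, Gen.family, Int.toNat_of_nonneg hi.1]

theorem foxDerivative_gb (hi : 0 ≤ i ∧ i ≤ n) :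
    foxDerivative (πB K n) (Gen.family α β γ) (gb K n i) = β i := by
  rw [gb, dif_pos hi, foxDerivative_ι, Gen.family, Int.toNat_of_nonneg hi.1]

theorem foxDerivative_gc (hi : 0 ≤ i ∧ i ≤ n) :
    foxDerivative (πB K n) (Gen.family α β γ) (gc K n i) = γ i := by
  rw [gc, dif_pos hi, foxDerivative_ι, Gen.family, Int.toNat_of_nonneg hi.1]

variable {α β γ}

theorem foxDerivative_eq_zero_of_mem_rels
    (habc : ∀ i, abB K n i • γ i + (cB K n (i + 1) * aB K n (i + 1)) • β (i + 1) = 0)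
    (hcc : ∀ i, cB K n i • γ (i + 1) = 0) (hba : ∀ i, bB K n (i + 1) • α i = 0)
    (hbca : ∀ i, (bB K n i * cB K n i) • α i = 0) (hca : cB K n 0 • α 0 = 0)
    {r : FA K n} (hr : r ∈ rels K n) :
    foxDerivative (πB K n) (Gen.family α β γ) r = 0 := by
  rcases hr with rfl | rfl | ⟨i, hi, rfl | rfl | rfl | rfl⟩ <;>
    simp only [map_add, foxDerivative_mul, map_mul, algebraMapInv_ga, algebraMapInv_gb,
      algebraMapInv_gc, zero_smul, add_zero]
  · rw [foxDerivative_gc α β γ (by omega)]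
    have := habc n
    rw [cB_eq_zero_of_not_mem (by omega), zero_mul, zero_smul, add_zero] at this
    exact this
  · rw [foxDerivative_ga α β γ (by omega)]
    exact hca
  · rw [foxDerivative_gc α β γ (by omega), foxDerivative_gb α β γ (by omega)]
    exact habc i
  · rw [foxDerivative_ga α β γ (by omega)]
    exact hbca (i + 1)
  · rw [foxDerivative_gc α β γ (by omega)]
    exact hcc i
  · rw [foxDerivative_ga α β γ (by omega)]
    exact hba i

theorem exists_linearMap_mul_generator_eq_smul
    (habc : ∀ i, abB K n i • γ i + (cB K n (i + 1) * aB K n (i + 1)) • β (i + 1) = 0)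
    (hcc : ∀ i, cB K n i • γ (i + 1) = 0) (hba : ∀ i, bB K n (i + 1) • α i = 0)
    (hbca : ∀ i, (bB K n i * cB K n i) • α i = 0) (hca : cB K n 0 • α 0 = 0) :
    ∃ D : B K n →ₗ[K] M, ∀ i : ℤ, 0 ≤ i ∧ i ≤ n → ∀ x, D (x * aB K n i) = x • α i ∧
      D (x * bB K n i) = x • β i ∧ D (x * cB K n i) = x • γ i := by
  obtain ⟨D, hD⟩ := exists_linearMap_mul_ι_eq_smul (rel := BRel K n) (m := Gen.family α β γ)
    (by rintro z _ ⟨hz, rfl⟩; rw [algebraMapInv_eq_zero_of_mem_rels hz, map_zero])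
    (by
      rintro z _ ⟨hz, rfl⟩
      exact (foxDerivative_eq_zero_of_mem_rels habc hcc hba hbca hca hz).trans (map_zero _).symm)
  refine ⟨D, fun i hi x ↦ ⟨?_, ?_, ?_⟩⟩
  · rw [aB, ga, dif_pos hi, πB, hD, Gen.family, Int.toNat_of_nonneg hi.1]
  · rw [bB, gb, dif_pos hi, πB, hD, Gen.family, Int.toNat_of_nonneg hi.1]
  · rw [cB, gc, dif_pos hi, πB, hD, Gen.family, Int.toNat_of_nonneg hi.1]

theorem exists_linearMap_mul_cB_mul_bB_succ_eq_smul {p q : M}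
    (hpq : abB K n i • p + (cB K n (i + 1) * aB K n (i + 1)) • q = 0)
    (hp : cB K n (i - 1) • p = 0) :
    ∃ D : B K n →ₗ[K] M, (0 ≤ i ∧ i ≤ n → ∀ x, D (x * cB K n i) = x • p) ∧
      (0 ≤ i + 1 ∧ i + 1 ≤ n → ∀ y, D (y * bB K n (i + 1)) = y • q) := by
  obtain ⟨D, hD⟩ := exists_linearMap_mul_generator_eq_smul (K := K) (n := n) (α := 0)
    (β := Pi.single (i + 1) q) (γ := Pi.single i p)
    (fun k ↦ by
      obtain rfl | hk := eq_or_ne k i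
      · simpa using hpq
      · simp [hk])
    (fun k ↦ by
      obtain rfl | hk := eq_or_ne (k + 1) i
      · simpa using hp
      · simp [hk])
    (by simp) (by simp) (by simp)
  refine ⟨D, fun hi x ↦ ?_, fun hi y ↦ ?_⟩
  · rw [(hD i hi x).2.2, Pi.single_eq_same]
  · rw [(hD (i + 1) hi y).2.1, Pi.single_eq_same]

theorem exists_of_mul_cB_add_mul_bB_succ_eq_zero {x y : B K n}
    (h : x * cB K n i + y * bB K n (i + 1) = 0) :
    ∃ u w, (0 ≤ i ∧ i ≤ n → x = u * abB K n i + w * cB K n (i - 1)) ∧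
      (0 ≤ i + 1 ∧ i + 1 ≤ n → y = u * (cB K n (i + 1) * aB K n (i + 1))) := by
  let N : Submodule (B K n) (B K n × B K n) :=
    Submodule.span _ {(abB K n i, cB K n (i + 1) * aB K n (i + 1)), (cB K n (i - 1), 0)}
  have mk_eq_zero {z : B K n × B K n} : N.mkQ z = 0 ↔ z ∈ N := Submodule.Quotient.mk_eq_zero N
  have smul_mk (z s t : B K n) : z • N.mkQ (s, t) = N.mkQ (z * s, z * t) := rfl
  obtain ⟨D, hDc, hDb⟩ := exists_linearMap_mul_cB_mul_bB_succ_eq_smul (i := i)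
    (p := N.mkQ (1, 0)) (q := N.mkQ (0, 1))
    (by
      rw [smul_mk, smul_mk, ← map_add, mk_eq_zero]
      exact Submodule.subset_span (by simp))
    (by
      rw [smul_mk, mk_eq_zero]
      exact Submodule.subset_span (by simp))
  obtain ⟨x', hx', hDx⟩ : ∃ x', (0 ≤ i ∧ i ≤ n → x = x') ∧ D (x * cB K n i) = N.mkQ (x', 0) := by
    by_cases hi : 0 ≤ i ∧ i ≤ n
    · exact ⟨x, fun _ ↦ rfl, by rw [hDc hi, smul_mk, mul_one, mul_zero]⟩
    · refine ⟨0, fun h ↦ absurd h hi, ?_⟩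
      rw [cB_eq_zero_of_not_mem hi, mul_zero, Prod.mk_zero_zero, map_zero, map_zero]
  obtain ⟨y', hy', hDy⟩ : ∃ y', (0 ≤ i + 1 ∧ i + 1 ≤ n → y = y') ∧
      D (y * bB K n (i + 1)) = N.mkQ (0, y') := by
    by_cases hi : 0 ≤ i + 1 ∧ i + 1 ≤ n
    · exact ⟨y, fun _ ↦ rfl, by rw [hDb hi, smul_mk, mul_one, mul_zero]⟩
    · refine ⟨0, fun h ↦ absurd h hi, ?_⟩
      rw [bB_eq_zero_of_not_mem hi, mul_zero, Prod.mk_zero_zero, map_zero, map_zero]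
  have hmem : (x', y') ∈ N := by
    rw [← mk_eq_zero, ← map_zero D, ← h, map_add, hDx, hDy, ← map_add, Prod.mk_add_mk, add_zero,
      zero_add]
  obtain ⟨u, w, huw⟩ := Submodule.mem_span_pair.1 hmem
  obtain ⟨hu, hw⟩ := Prod.ext_iff.1 huw
  exact ⟨u, w, fun hi ↦ (hx' hi).trans hu.symm, fun hi ↦ by simpa [hy' hi] using hw.symm⟩

theorem mem_of_mul_aB_eq_zero {I : Ideal (B K n)} (hi : 0 ≤ i ∧ i ≤ n)
    (hb : bB K n (i + 1) ∈ I) (hbc : bB K n i * cB K n i ∈ I) (hc : i = 0 → cB K n 0 ∈ I)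
    {x : B K n} (hx : x * aB K n i = 0) : x ∈ I := by
  have smul_one_eq_zero (z : B K n) : z • I.mkQ 1 = 0 ↔ z ∈ I := by
    rw [← map_smul, smul_eq_mul, mul_one, Submodule.mkQ_apply, Submodule.Quotient.mk_eq_zero]
  obtain ⟨D, hD⟩ := exists_linearMap_mul_generator_eq_smul (K := K) (n := n) (β := 0) (γ := 0)
    (α := Pi.single i (I.mkQ 1)) (by simp) (by simp)
    (fun k ↦ by
      obtain rfl | hk := eq_or_ne k i
      · rwa [Pi.single_eq_same, smul_one_eq_zero]
      · simp [hk])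
    (fun k ↦ by
      obtain rfl | hk := eq_or_ne k i
      · rwa [Pi.single_eq_same, smul_one_eq_zero]
      · simp [hk])
    (by
      obtain rfl | hk := eq_or_ne i 0
      · rw [Pi.single_eq_same, smul_one_eq_zero]
        exact hc rfl
      · simp [hk.symm])
  have hDx := (hD i hi x).1
  rw [hx, map_zero, Pi.single_eq_same] at hDx
  exact (smul_one_eq_zero x).1 hDx.symm

theorem exists_of_mul_cB_top_eq_zero {x : B K n} (hx : x * cB K n n = 0) :
    ∃ u w, x = u * abB K n n + w * cB K n (n - 1) := by
  have h : x * cB K n n + 0 * bB K n (n + 1) = 0 := by rw [hx, zero_mul, add_zero]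
  obtain ⟨u, w, hxuw, -⟩ := exists_of_mul_cB_add_mul_bB_succ_eq_zero h
  exact ⟨u, w, hxuw (by omega)⟩

theorem exists_of_mul_cB_mul_aB_eq_zero (hi : 0 < i ∧ i ≤ n) {u : B K n}
    (hu : u * cB K n i * aB K n i = 0) :
    ∃ s p q, u = s * bB K n i + p * abB K n i + q * cB K n (i - 1) := by
  obtain ⟨s, t, hst⟩ := Submodule.mem_span_pair.1 <|
    mem_of_mul_aB_eq_zero (I := Ideal.span {bB K n i * cB K n i, bB K n (i + 1)})
      (by omega) (Ideal.subset_span (by simp)) (Ideal.subset_span (by simp)) (by omega) hu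
  rw [smul_eq_mul, smul_eq_mul] at hst
  have h : (u - s * bB K n i) * cB K n i + -t * bB K n (i + 1) = 0 := by
    rw [sub_mul, ← hst, mul_assoc, add_sub_cancel_left, ← add_mul, add_neg_cancel, zero_mul]
  obtain ⟨p, q, hpq, -⟩ := exists_of_mul_cB_add_mul_bB_succ_eq_zero h
  exact ⟨s, p, q, by rw [add_assoc, ← sub_eq_iff_eq_add', hpq (by omega)]⟩

theorem exists_of_mul_cB_eq_zero (hi : 0 ≤ i ∧ i < n) {x : B K n} (hx : x * cB K n i = 0) :
    ∃ w, x = w * cB K n (i - 1) := by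
  have h : x * cB K n i + 0 * bB K n (i + 1) = 0 := by rw [hx, zero_mul, add_zero]
  obtain ⟨u, w, hxuw, hu⟩ := exists_of_mul_cB_add_mul_bB_succ_eq_zero h
  obtain ⟨s, p, q, rfl⟩ := exists_of_mul_cB_mul_aB_eq_zero (i := i + 1) (u := u) (by omega)
    (by rw [mul_assoc, ← hu (by omega)])
  have hb : bB K n (i + 1) * abB K n i = 0 := by
    rw [abB, ← mul_assoc, bB_succ_mul_aB, zero_mul]
  have hc : abB K n (i - 1) * cB K n (i - 1) + cB K n i * abB K n i = 0 := by
    simpa only [sub_add_cancel] using abB_mul_cB_add_cB_succ_mul_abB_succ (K := K) (n := n) (i - 1)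
  refine ⟨w - q * abB K n (i - 1), ?_⟩
  rw [sub_mul, eq_sub_iff_add_eq]
  calc x + q * abB K n (i - 1) * cB K n (i - 1)
      = s * (bB K n (i + 1) * abB K n i) + p * (abB K n (i + 1) * abB K n i) +
          q * (abB K n (i - 1) * cB K n (i - 1) + cB K n i * abB K n i) + w * cB K n (i - 1) := by
        rw [hxuw (by omega), add_sub_cancel_right]
        noncomm_ring
    _ = w * cB K n (i - 1) := by
        rw [hb, abB_succ_mul_abB, hc, mul_zero, mul_zero, mul_zero, add_zero, add_zero, zero_add]

theorem exists_of_mul_abB_top_add_mul_cB_eq_zero {x y : B K n}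
    (h : x * abB K n n + y * cB K n (n - 1) = 0) : ∃ w, x = w * cB K n n := by
  have hcb : y * cB K n (n - 1) + x * aB K n n * bB K n (n - 1 + 1) = 0 := by
    rwa [sub_add_cancel, mul_assoc, add_comm]
  obtain ⟨u, -, -, hu⟩ := exists_of_mul_cB_add_mul_bB_succ_eq_zero hcb
  rw [sub_add_cancel] at hu
  have hc : cB K n n ∈ Ideal.span {cB K n n} := Ideal.mem_span_singleton_self _
  have hb : bB K n (n + 1) ∈ Ideal.span {cB K n n} := by
    rw [bB_eq_zero_of_not_mem (by omega)]
    exact zero_mem _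
  have hmem : x - u * cB K n n ∈ Ideal.span {cB K n n} :=
    mem_of_mul_aB_eq_zero (by omega) hb (Ideal.mul_mem_left _ _ hc) (fun hn ↦ hn ▸ hc)
      (by rw [sub_mul, hu (by omega), mul_assoc, sub_self])
  obtain ⟨w, hw⟩ := Ideal.mem_span_singleton'.1 hmem
  exact ⟨w + u, by rw [add_mul, hw, sub_add_cancel]⟩

end Syzygies

section TotalDifferential

variable {K : Type} [Field K] {n : ℕ}

/-- The operator `(d v)_i = v_{i+1} a_i b_i + v_{i-1} c_{i-1}` on sequences in `B`. All the matrices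
`R_p` and `U_p` are truncations of it: `R_p` takes the entries of odd offset from `n` to those of
even offset, and `U_p` conversely. -/
noncomputable def totalDiff (v : ℤ → B K n) (i : ℤ) : B K n :=
  v (i + 1) * abB K n i + v (i - 1) * cB K n (i - 1)

/-- The indices of the basis of a free module of the resolution: those in `[0, n + 1]` which are at
least `l` and have the parity of `l`. The module `F_{j+1}` corresponds to `l = n - j`, and the
target of the augmentation to `l = n + 1`. -/
def basisIndices (n : ℕ) (l : ℤ) : Set ℤ := {i | 0 ≤ i ∧ l ≤ i ∧ i ≤ n + 1 ∧ 2 ∣ i - l}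

theorem totalDiff_totalDiff (v : ℤ → B K n) (i : ℤ) : totalDiff (totalDiff v) i = 0 := by
  have hab : abB K n (i + 1) * abB K n i = 0 := abB_succ_mul_abB i
  have hca : abB K n (i - 1) * cB K n (i - 1) + cB K n i * abB K n i = 0 := by
    simpa only [sub_add_cancel] using abB_mul_cB_add_cB_succ_mul_abB_succ (K := K) (n := n) (i - 1)
  have hcc : cB K n (i - 1 - 1) * cB K n (i - 1) = 0 := by
    simpa only [sub_add_cancel] using cB_mul_cB_succ (K := K) (n := n) (i - 1 - 1)
  simp only [totalDiff, add_sub_cancel_right, sub_add_cancel, add_mul, mul_assoc, hab, hcc,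
    mul_zero, zero_add, add_zero]
  rw [← mul_add, add_comm, hca, mul_zero]

theorem totalDiff_congr {v w : ℤ → B K n} {i : ℤ} (hsucc : i ≤ n → v (i + 1) = w (i + 1))
    (hpred : 1 ≤ i → v (i - 1) = w (i - 1)) : totalDiff v i = totalDiff w i := by
  unfold totalDiff
  congr 1
  · by_cases hi : i ≤ n
    · rw [hsucc hi]
    · rw [abB_eq_zero_of_not_mem (by omega), mul_zero, mul_zero]
  · by_cases hi : 1 ≤ i
    · rw [hpred hi]
    · rw [cB_eq_zero_of_not_mem (by omega), mul_zero, mul_zero]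

theorem exists_eq_totalDiff_top {v : ℤ → B K n} (hv : totalDiff v n = 0) :
    ∃ w, v (n + 1) = totalDiff w (n + 1) := by
  obtain ⟨u, hu⟩ := exists_of_mul_abB_top_add_mul_cB_eq_zero hv
  refine ⟨fun _ ↦ u, ?_⟩
  rw [totalDiff, abB_eq_zero_of_not_mem (by omega), mul_zero, zero_add, add_sub_cancel_right, hu]

theorem exists_eq_totalDiff_of_succ_top {v : ℤ → B K n} (hv : totalDiff v (n + 1) = 0) :
    ∃ w, v n = totalDiff w n := by
  rw [totalDiff, abB_eq_zero_of_not_mem (by omega), mul_zero, zero_add,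
    add_sub_cancel_right] at hv
  obtain ⟨u, w, huw⟩ := exists_of_mul_cB_top_eq_zero hv
  refine ⟨fun k ↦ if k = n + 1 then u else w, ?_⟩
  rw [totalDiff, if_pos rfl, if_neg (by omega), huw]

theorem exists_eq_mul_abB_add_mul_cB {v w : ℤ → B K n} {i : ℤ} (hi : 0 ≤ i ∧ i < n)
    (hv : totalDiff v (i + 1) = 0) (hvw : v (i + 2) = totalDiff w (i + 2)) :
    ∃ z, v i = w (i + 1) * abB K n i + z * cB K n (i - 1) := by
  have hannihilates : (v i - w (i + 1) * abB K n i) * cB K n i = 0 := by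
    have hab : abB K n (i + 2) * abB K n (i + 1) = 0 := by
      simpa only [add_assoc, one_add_one_eq_two] using abB_succ_mul_abB (K := K) (n := n) (i + 1)
    have hca : w (i + 1) * (abB K n i * cB K n i) +
        w (i + 1) * (cB K n (i + 1) * abB K n (i + 1)) = 0 := by
      rw [← mul_add, abB_mul_cB_add_cB_succ_mul_abB_succ, mul_zero]
    rw [totalDiff, add_assoc, one_add_one_eq_two, add_sub_cancel_right, hvw, totalDiff,
      show i + 2 - 1 = i + 1 by ring, add_mul, mul_assoc, mul_assoc, hab, mul_zero, zero_add] at hv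
    rw [sub_mul, mul_assoc, sub_eq_zero]
    exact add_left_cancel (hv.trans (hca.symm.trans (add_comm _ _)))
  obtain ⟨z, hz⟩ := exists_of_mul_cB_eq_zero hi hannihilates
  exact ⟨z, by rw [← hz, add_sub_cancel]⟩

theorem exists_eq_totalDiff_of_le {v : ℤ → B K n} {l : ℤ} (hl : l ≤ n)
    (hv : ∀ i ∈ basisIndices n (l + 1), totalDiff v i = 0) (m : ℕ) :
    ∃ w, ∀ i ∈ basisIndices n l, n - m ≤ i → v i = totalDiff w i := by
  induction m with
  | zero =>
    by_cases hparity : 2 ∣ n - l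
    · obtain ⟨w, hw⟩ := exists_eq_totalDiff_of_succ_top
        (hv (n + 1) ⟨by omega, by omega, by omega, by omega⟩)
      refine ⟨w, fun i ⟨_, _, _, _⟩ _ ↦ ?_⟩
      obtain rfl : i = n := by omega
      exact hw
    · obtain ⟨w, hw⟩ := exists_eq_totalDiff_top (hv n ⟨by omega, by omega, by omega, by omega⟩)
      refine ⟨w, fun i ⟨_, _, _, _⟩ _ ↦ ?_⟩
      obtain rfl : i = n + 1 := by omega
      exact hw
  | succ m ih =>
    obtain ⟨w, hw⟩ := ih
    by_cases hmem : (n - (m + 1) : ℤ) ∈ basisIndices n l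
    · obtain ⟨_, _, _, _⟩ := hmem
      obtain ⟨z, hz⟩ := exists_eq_mul_abB_add_mul_cB (i := n - (m + 1)) (by omega)
        (hv _ ⟨by omega, by omega, by omega, by omega⟩)
        (hw _ ⟨by omega, by omega, by omega, by omega⟩ (by omega))
      refine ⟨Function.update w (n - (m + 1) - 1) z, fun i ⟨_, _, _, _⟩ _ ↦ ?_⟩
      obtain rfl | hi : i = n - (m + 1) ∨ n - (m + 1) + 2 ≤ i := by omega
      · rw [totalDiff, Function.update_self, Function.update_of_ne (by omega), hz]
      · rw [hw i ⟨by omega, by omega, by omega, by omega⟩ (by omega), totalDiff, totalDiff,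
          Function.update_of_ne (by omega), Function.update_of_ne (by omega)]
    · refine ⟨w, fun i hi _ ↦ hw i hi ?_⟩
      have : i ≠ n - (m + 1) := fun h ↦ hmem (h ▸ hi)
      omega

theorem totalDiff_eq_zero_iff_exists {v : ℤ → B K n} {l : ℤ} (hl : l ≤ n) :
    (∀ i ∈ basisIndices n (l + 1), totalDiff v i = 0) ↔
      ∃ w, ∀ i ∈ basisIndices n l, v i = totalDiff w i := by
  constructor
  · intro hv
    obtain ⟨w, hw⟩ := exists_eq_totalDiff_of_le hl hv n
    exact ⟨w, fun i hi ↦ hw i hi (by rw [sub_self]; exact hi.1)⟩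
  · rintro ⟨w, hw⟩ i ⟨_, _, _, _⟩
    rw [← totalDiff_totalDiff w i]
    exact totalDiff_congr (fun _ ↦ hw _ ⟨by omega, by omega, by omega, by omega⟩)
      (fun _ ↦ hw _ ⟨by omega, by omega, by omega, by omega⟩)

end TotalDifferential

section BandMatrices

theorem MatB.ext_entries {R : Type} [Semiring R] {P Q : MatB R} (hrows : P.rows = Q.rows)
    (hcols : P.cols = Q.cols)
    (hM : ∀ s t hs ht hs' ht', P.M ⟨s, hs⟩ ⟨t, ht⟩ = Q.M ⟨s, hs'⟩ ⟨t, ht'⟩) : P = Q := by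
  obtain ⟨p, q, M⟩ := P
  obtain ⟨p', q', N⟩ := Q
  obtain rfl : p = p' := hrows
  obtain rfl : q = q' := hcols
  exact congrArg (MatB.mk p q) (Matrix.ext fun s t ↦ hM s t _ _ s.2 t.2)

variable (K : Type) [Field K] (n : ℕ)

/-- The coefficient of `v_r` in `(d v)_i`, where `d` is `totalDiff`. -/
noncomputable def bandEntry (r i : ℤ) : B K n :=
  (if r = i + 1 then abB K n i else 0) + if r = i - 1 then cB K n (i - 1) else 0

/-- The matrix of `totalDiff` with rows indexed by `r, r - 2, r - 4, …` and columns indexed by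
`c, c - 2, c - 4, …`. -/
noncomputable def bandMat (rows cols : ℕ) (r c : ℤ) : MatB (B K n) :=
  ⟨rows, cols, Matrix.of fun s t ↦ bandEntry K n (r - 2 * (s : ℕ)) (c - 2 * (t : ℕ))⟩

variable {K n}

theorem bandEntry_eq_zero {r i : ℤ} (hsucc : r ≠ i + 1) (hpred : r ≠ i - 1) :
    bandEntry K n r i = 0 := by
  rw [bandEntry, if_neg hsucc, if_neg hpred, add_zero]

theorem bandEntry_succ (i : ℤ) : bandEntry K n (i + 1) i = abB K n i := by
  rw [bandEntry, if_pos rfl, if_neg (by omega), add_zero]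

theorem bandEntry_pred (i : ℤ) : bandEntry K n (i - 1) i = cB K n (i - 1) := by
  rw [bandEntry, if_pos rfl, if_neg (by omega), zero_add]

theorem GammaMat_eq_bandMat (i : ℤ) :
    GammaMat K n i = bandMat K n (if i = 0 then 1 else 2) 1 (i + 1) i := by
  unfold GammaMat
  split_ifs with hi
  · subst hi
    refine congrArg (MatB.mk 1 1) (Matrix.ext fun s t ↦ ?_)
    fin_cases s, t
    exact (bandEntry_succ 0).symm
  · refine congrArg (MatB.mk 2 1) (Matrix.ext fun s t ↦ ?_)
    fin_cases s, t
    · simpa [GammaP, abB] using (bandEntry_succ (K := K) (n := n) i).symm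
    · simpa [GammaP, show i + 1 - 2 = i - 1 by ring] using
        (bandEntry_pred (K := K) (n := n) i).symm

theorem cB_top_eq_bandMat : (⟨1, 1, !![cB K n n]⟩ : MatB (B K n)) = bandMat K n 1 1 n (n + 1) := by
  refine congrArg (MatB.mk 1 1) (Matrix.ext fun s t ↦ ?_)
  fin_cases s, t
  simpa using (bandEntry_pred (K := K) (n := n) (n + 1)).symm

theorem bandMat_star_bandMat {p q p' q' : ℕ} {r c : ℤ} (h : r - 2 * p = c - 2 * q + 1) :
    (bandMat K n (p + 1) q r c).star (bandMat K n p' q' (r - 2 * p) (c - 2 * q)) =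
      bandMat K n (p + p') (q + q') r c := by
  refine MatB.ext_entries (by simp only [MatB.star, bandMat]; omega) rfl ?_
  intro s t _ _ _ _
  simp only [MatB.star, starM, bandMat, Matrix.of_apply]
  split_ifs with htop hbottom
  · rfl
  · congr 1 <;> push_cast [hbottom] <;> omega
  · exact (bandEntry_eq_zero (by omega) (by omega)).symm

theorem foldl_starGamma_bandMat {r c δ : ℕ} (h : r + 1 = c + 2 * δ) (m : ℕ) :
    ((List.range m).map fun t : ℕ ↦ (c : ℤ) - 2 * (t + 1)).foldl (starGamma K n)
        (bandMat K n (min δ (r / 2) + 1) 1 r c) =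
      bandMat K n (min (m + δ) (r / 2) + 1) (min m (c / 2) + 1) r c := by
  induction m with
  | zero => simp
  | succ m ih =>
    rw [List.range_succ, List.map_append, List.foldl_append, ih, List.map_singleton,
      List.foldl_cons, List.foldl_nil, starGamma]
    split_ifs with hneg
    · congr 2 <;> omega
    · have hrow : ((c : ℤ) - 2 * (m + 1)) + 1 = r - 2 * (min (m + δ) (r / 2) : ℕ) := by omega
      have hcol : (c : ℤ) - 2 * (m + 1) = c - 2 * (min m (c / 2) + 1 : ℕ) := by omega
      rw [GammaMat_eq_bandMat, hrow, hcol, bandMat_star_bandMat (by omega)]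
      congr 1
      · split_ifs <;> omega
      · omega

theorem Rmat_eq_bandMat (p : ℕ) :
    Rmat K n p = bandMat K n (min ((n - p) / 2 + 1) ((n + 1) / 2) + 1)
      (min ((n - p) / 2) (n / 2) + 1) (n + 1 : ℕ) n := by
  rw [← foldl_starGamma_bandMat (by ring), Rmat, GammaMat_eq_bandMat]
  congr 1
  · congr 1
    split_ifs <;> omega
  · rw [bind_pure_comp, List.map_eq_map, List.map_map]
    rfl

theorem Umat_eq_bandMat (p : ℕ) :
    Umat K n p = bandMat K n (min ((n - p) / 2 + 1) (n / 2) + 1)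
      (min ((n - p) / 2 + 1) ((n + 1) / 2) + 1) n (n + 1 : ℕ) := by
  have hfold := foldl_starGamma_bandMat (K := K) (n := n) (r := n) (c := n + 1) (δ := 0) rfl
    ((n - p) / 2 + 1)
  rw [add_zero] at hfold
  rw [← hfold, Umat, cB_top_eq_bandMat]
  congr 1
  rw [bind_pure_comp, List.map_eq_map, List.map_map]
  refine List.map_congr_left fun t _ ↦ ?_
  simp only [Function.comp_apply]
  omega

end BandMatrices

section Resolution

/-- The rank of the free module `F_{j+1}` of the resolution. -/
def freeRank (n j : ℕ) : ℕ := min ((j + 1) / 2) ((n + j % 2) / 2) + 1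

/-- The index in `basisIndices n (n - j)` of the `t`-th basis vector of `F_{j+1}`. -/
def basisIndex (n j : ℕ) (t : Fin (freeRank n j)) : ℤ := (n + j % 2 : ℕ) - 2 * (t : ℕ)

theorem basisIndex_injective (n j : ℕ) : Function.Injective (basisIndex n j) := by
  intro s t hst
  unfold basisIndex at hst
  omega

theorem range_basisIndex (n j : ℕ) : Set.range (basisIndex n j) = basisIndices n (n - j) := by
  ext i
  constructor
  · rintro ⟨⟨t, ht⟩, rfl⟩
    unfold freeRank at ht
    refine ⟨?_, ?_, ?_, ?_⟩ <;> simp only [basisIndex] <;> omega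
  · rintro ⟨_, _, _, _⟩
    refine ⟨⟨((n + j % 2 : ℕ) - i).toNat / 2, by unfold freeRank; omega⟩, ?_⟩
    simp only [basisIndex]
    omega

theorem sum_mul_ite_eq_of_injective {ι κ R : Type*} [Fintype ι] [DecidableEq κ]
    [NonUnitalNonAssocSemiring R] {e : ι → κ} (he : Function.Injective e) (w : κ → R) {k : κ}
    {a : R} (ha : k ∉ Set.range e → a = 0) :
    ∑ s, w (e s) * (if e s = k then a else 0) = w k * a := by
  by_cases hk : k ∈ Set.range e
  · obtain ⟨s, rfl⟩ := hk
    rw [Fintype.sum_eq_single s fun s' hs' ↦ by rw [if_neg (he.ne hs'), mul_zero], if_pos rfl]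
  · simp [ha hk]

variable (K : Type) [Field K] (n : ℕ)

/-- The matrix of the differential `F_{j+2} → F_{j+1}`. -/
noncomputable def diffMatrix (j : ℕ) :
    Matrix (Fin (freeRank n (j + 1))) (Fin (freeRank n j)) (B K n) :=
  Matrix.of fun s t ↦ bandEntry K n (basisIndex n (j + 1) s) (basisIndex n j t)

theorem DC_eq_diffMatrix :
    DC K n = fun j ↦ ⟨freeRank n (j + 1), freeRank n j, diffMatrix K n j⟩ := by
  funext j
  change DC K n j = bandMat K n (freeRank n (j + 1)) (freeRank n j) (n + (j + 1) % 2 : ℕ)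
    (n + j % 2 : ℕ)
  unfold DC freeRank
  split_ifs
  · rw [Rmat_eq_bandMat]
    congr 1 <;> omega
  · rw [Umat_eq_bandMat]
    congr 1 <;> omega
  · rw [Rmat_eq_bandMat]
    congr 1 <;> omega
  · rw [Umat_eq_bandMat]
    congr 1 <;> omega

variable {K n}

theorem vecMul_diffMatrix (j : ℕ) (w : ℤ → B K n) :
    Matrix.vecMul (w ∘ basisIndex n (j + 1)) (diffMatrix K n j) =
      totalDiff w ∘ basisIndex n j := by
  funext t
  obtain ⟨_, _, _, _⟩ : basisIndex n j t ∈ basisIndices n (n - j) :=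
    range_basisIndex n j ▸ Set.mem_range_self t
  have hab : basisIndex n j t + 1 ∉ Set.range (basisIndex n (j + 1)) →
      abB K n (basisIndex n j t) = 0 := by
    rw [range_basisIndex]
    refine fun h ↦ abB_eq_zero_of_not_mem fun _ ↦ h ⟨?_, ?_, ?_, ?_⟩ <;> omega
  have hc : basisIndex n j t - 1 ∉ Set.range (basisIndex n (j + 1)) →
      cB K n (basisIndex n j t - 1) = 0 := by
    rw [range_basisIndex]
    refine fun h ↦ cB_eq_zero_of_not_mem fun _ ↦ h ⟨?_, ?_, ?_, ?_⟩ <;> omega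
  simp only [Matrix.vecMul, dotProduct, diffMatrix, Matrix.of_apply, Function.comp_apply,
    bandEntry, mul_add, Finset.sum_add_distrib]
  rw [sum_mul_ite_eq_of_injective (basisIndex_injective n (j + 1)) w hab,
    sum_mul_ite_eq_of_injective (basisIndex_injective n (j + 1)) w hc, totalDiff]

theorem exists_eq_vecMul_diffMatrix_iff (j : ℕ) (v : ℤ → B K n) :
    (∃ w, v ∘ basisIndex n j = Matrix.vecMul w (diffMatrix K n j)) ↔
      ∃ w, ∀ i ∈ basisIndices n (n - j), v i = totalDiff w i := by
  rw [(basisIndex_injective n (j + 1)).surjective_comp_right.exists]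
  simp only [vecMul_diffMatrix, ← range_basisIndex, Set.forall_mem_range, funext_iff,
    Function.comp_apply]

theorem vecMul_diffMatrix_eq_zero_iff (j : ℕ) (v : Fin (freeRank n (j + 1)) → B K n) :
    Matrix.vecMul v (diffMatrix K n j) = 0 ↔
      ∃ w, v = Matrix.vecMul w (diffMatrix K n (j + 1)) := by
  obtain ⟨v, rfl⟩ := (basisIndex_injective n (j + 1)).surjective_comp_right v
  have hl : ((n : ℤ) - (j + 1 : ℕ)) + 1 = n - j := by push_cast; ring
  rw [exists_eq_vecMul_diffMatrix_iff, ← totalDiff_eq_zero_iff_exists (by omega), hl,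
    vecMul_diffMatrix, ← range_basisIndex, Set.forall_mem_range, funext_iff]
  rfl

theorem freeRank_zero (n : ℕ) : freeRank n 0 = 1 := by simp [freeRank]

theorem sum_mul_cB_top_eq_mul (v : Fin (freeRank n 0) → B K n) (t : Fin (freeRank n 0)) :
    ∑ s, v s * cB K n n = v t * cB K n n := by
  have : Subsingleton (Fin (freeRank n 0)) := by rw [freeRank_zero]; infer_instance
  exact Fintype.sum_subsingleton _ t

theorem mem_span_cB_top_iff (y : B K n) :
    y ∈ Ideal.span {cB K n n} ↔ ∃ v : Fin (freeRank n 0) → B K n, y = ∑ t, v t * cB K n n := by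
  let t₀ : Fin (freeRank n 0) := ⟨0, by simp [freeRank_zero]⟩
  rw [Ideal.mem_span_singleton']
  constructor
  · rintro ⟨x, rfl⟩
    exact ⟨fun _ ↦ x, (sum_mul_cB_top_eq_mul (fun _ ↦ x) t₀).symm⟩
  · rintro ⟨v, rfl⟩
    exact ⟨v t₀, (sum_mul_cB_top_eq_mul v t₀).symm⟩

theorem sum_mul_cB_top_eq_zero_iff (v : Fin (freeRank n 0) → B K n) :
    ∑ t, v t * cB K n n = 0 ↔ ∃ w, v = Matrix.vecMul w (diffMatrix K n 0) := by
  obtain ⟨v, rfl⟩ := (basisIndex_injective n 0).surjective_comp_right v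
  have hsum : ∑ t, v (basisIndex n 0 t) * cB K n n = totalDiff v (n + 1) := by
    rw [sum_mul_cB_top_eq_mul (fun t ↦ v (basisIndex n 0 t)) ⟨0, by simp [freeRank_zero]⟩,
      totalDiff, abB_eq_zero_of_not_mem (by omega), mul_zero, zero_add, add_sub_cancel_right]
    simp [basisIndex]
  have hindices : basisIndices n (n + 1) = {(n + 1 : ℤ)} := by
    ext i
    simp only [basisIndices, Set.mem_ofPred_eq, Set.mem_singleton_iff]
    omega
  rw [exists_eq_vecMul_diffMatrix_iff, Nat.cast_zero, sub_zero,
    ← totalDiff_eq_zero_iff_exists le_rfl, hindices]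
  simp [hsum]

end Resolution

/-- Lemma 3.6.  The eventually periodic complex
`⋯ → F₃ → F₂ → F₁ = B → B c_n → 0` with augmentation `z ↦ z c_n` and differentials
`R_n, U_{n−1}, R_{n−2}, …` (eventually `2`-periodic as in `DC`) is a free resolution of the
left ideal `B c_n`. -/
theorem stmt_13 (K : Type) [Field K] (n : ℕ) :
    -- the complex is well formed: consecutive matrices are composable, and `F₁ = B`
    (∀ j, (DC K n (j+1)).cols = (DC K n j).rows) ∧
    (DC K n 0).cols = 1 ∧
    -- the augmentation maps onto `B c_n`
    (∀ y, y ∈ Ideal.span {cB K n n} ↔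
      ∃ v : Fin (DC K n 0).cols → B K n, y = ∑ t, v t * cB K n n) ∧
    -- exactness at `F₁`: ker(augmentation) = im(first differential)
    (∀ v : Fin (DC K n 0).cols → B K n,
      (∑ t, v t * cB K n n) = 0 ↔
      ∃ w : Fin (DC K n 0).rows → B K n, v = Matrix.vecMul w (DC K n 0).M) ∧
    -- exactness at `F_{j+2}`: ker of the `(j+1)`-st differential = im of the `(j+2)`-nd
    (∀ j (h : (DC K n (j+1)).cols = (DC K n j).rows)
        (v : Fin (DC K n (j+1)).cols → B K n),
      Matrix.vecMul (v ∘ Fin.cast h.symm) (DC K n j).M = 0 ↔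
      ∃ w : Fin (DC K n (j+1)).rows → B K n, v = Matrix.vecMul w (DC K n (j+1)).M) := by
  rw [DC_eq_diffMatrix]
  exact ⟨fun _ ↦ rfl, freeRank_zero n, mem_span_cB_top_iff, sum_mul_cB_top_eq_zero_iff,
    fun j _ v ↦ vecMul_diffMatrix_eq_zero_iff j v⟩
end
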